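/- arXiv:2210.16581 — 2 statements merged into one kernel-verified Lean document; each statement's English description precedes it below -/
import Mathlib

section
/- Let B be a nonidentity Pauli string on n qubits, ρ₀ a pure state, and define X(U,V) = (1/2)Tr[ρ₀ {U† B U, V† B V}] for independent Haar-random U, V ∈ U(2ⁿ). Then E[X] = 0 and E[X²] = (2ⁿ/(2(2^{2n}−1)))·(1 + (2ⁿ−2)/(2ⁿ(2ⁿ+1))), which is asymptotically 1/2^{n+1}. -/
open MeasureTheory Matrix
open scoped ComplexOrder

/-- The four single-qubit Pauli matrices `I, X, Y, Z`. -/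
noncomputable def pauli : Fin 4 → Matrix (Fin 2) (Fin 2) ℂ
  | 0 => 1
  | 1 => !![0, 1; 1, 0]
  | 2 => !![0, -Complex.I; Complex.I, 0]
  | 3 => !![1, 0; 0, -1]

/-- The `n`-qubit Pauli string `⊗_q pauli (s q)` (entrywise tensor-product formula). -/
noncomputable def pauliString {n : ℕ} (s : Fin n → Fin 4) :
    Matrix (Fin n → Fin 2) (Fin n → Fin 2) ℂ :=
  fun i j => ∏ q : Fin n, pauli (s q) (i q) (j q)

/-- The single-parameter ALD quantum Fisher kernel term
`X(U,V) = (1/2)·Tr[ρ₀ {U† B U, V† B V}]`. -/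
noncomputable def aldTerm {n : ℕ} (s : Fin n → Fin 4)
    (ρ₀ : Matrix (Fin n → Fin 2) (Fin n → Fin 2) ℂ)
    (U V : Matrix (Fin n → Fin 2) (Fin n → Fin 2) ℂ) : ℂ :=
  (1 / 2 : ℂ) * (ρ₀ * (star U * pauliString s * U * (star V * pauliString s * V) +
    star V * pauliString s * V * (star U * pauliString s * U))).trace

/-!
By right invariance of the Haar measure, `M ↦ E[Tr(M U† B U)]` and
`(M, N) ↦ E[Tr(M U† B U) Tr(N U† B U)]` are invariant under simultaneous unitary conjugation of
their arguments. Polarisation and the spectral theorem reduce such a form to diagonal matrices, and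
permutation matrices then leave only `Tr M` in the linear case, and `Tr(MN)` and `Tr M · Tr N` in
the symmetric bilinear case. The two coefficients of the bilinear form are the Weingarten
coefficients; they are found by evaluating at `(1, 1)` and by summing over the pairs of matrix units
`(E_kl, E_lk)`, which turns the two traces into `Tr(C)² = Tr(B)²` and `Tr(C²) = Tr(B²)` for
`C = U† B U`.

For fixed `U`, the kernel term is `Tr(J V† B V)` with `J = ½{ρ, U† B U}`, so the second moment over
`V` is a combination of `Tr J = Tr(ρ U† B U)` and `Tr(J²) = (1 + Tr(ρ U† B U)²) / 2`, the latter
because `ρ` has rank one. The remaining average of `Tr(ρ U† B U)²` over `U` is again a second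
moment, equal to `1 / (d + 1)`.
-/

section PiKronecker

variable {κ m R : Type*} [Fintype κ] [CommSemiring R]

/-- The tensor product `⨂ q, A q` of a finite family of matrices, with tensor factors indexed by
`κ` and rows and columns indexed by functions on `κ`. -/
def piKronecker (A : κ → Matrix m m R) : Matrix (κ → m) (κ → m) R :=
  fun i j => ∏ q, A q (i q) (j q)

theorem piKronecker_one [DecidableEq m] :
    piKronecker (fun _ : κ => (1 : Matrix m m R)) = 1 := by
  ext i j
  by_cases hij : i = j
  · subst hij
    simp [piKronecker]
  · obtain ⟨q, hq⟩ := Function.ne_iff.mp hij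
    rw [one_apply_ne hij]
    exact Finset.prod_eq_zero (Finset.mem_univ q) (one_apply_ne hq)

variable [DecidableEq κ] [Fintype m]

theorem piKronecker_mul (A B : κ → Matrix m m R) :
    piKronecker A * piKronecker B = piKronecker (fun q => A q * B q) := by
  ext i j
  simp only [piKronecker, mul_apply, ← Finset.prod_mul_distrib, Finset.prod_univ_sum,
    Fintype.piFinset_univ]

theorem trace_piKronecker (A : κ → Matrix m m R) :
    (piKronecker A).trace = ∏ q, (A q).trace := by
  simp only [piKronecker, trace, diag_apply, Finset.prod_univ_sum, Fintype.piFinset_univ]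

end PiKronecker

section Pauli

theorem pauli_mul_self (a : Fin 4) : pauli a * pauli a = 1 := by
  fin_cases a <;> simp [pauli, ← one_fin_two]

theorem trace_pauli_eq_zero {a : Fin 4} (ha : a ≠ 0) : (pauli a).trace = 0 := by
  fin_cases a <;> simp [pauli, trace_fin_two] at ha ⊢

variable {n : ℕ} (s : Fin n → Fin 4)

theorem pauliString_eq_piKronecker : pauliString s = piKronecker (fun q => pauli (s q)) := rfl

theorem pauliString_mul_self : pauliString s * pauliString s = 1 := by
  simp only [pauliString_eq_piKronecker, piKronecker_mul, pauli_mul_self, piKronecker_one]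

theorem trace_pauliString_eq_zero (hs : ∃ q, s q ≠ 0) : (pauliString s).trace = 0 := by
  obtain ⟨q, hq⟩ := hs
  rw [pauliString_eq_piKronecker, trace_piKronecker]
  exact Finset.prod_eq_zero (Finset.mem_univ q) (trace_pauli_eq_zero hq)

end Pauli

section RankOne

variable {ι K : Type*} [Fintype ι] [Field K]

/-- The Jordan product `½{A, C}` of two matrices. -/
def jordanMul (A C : Matrix ι ι K) : Matrix ι ι K :=
  (1 / 2 : K) • (A * C + C * A)

theorem trace_jordanMul_mul (ρ A C : Matrix ι ι K) :
    (jordanMul ρ A * C).trace = 1 / 2 * (ρ * (A * C + C * A)).trace := by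
  rw [jordanMul, smul_mul, trace_smul, smul_eq_mul, Matrix.add_mul, Matrix.mul_add, trace_add,
    trace_add, Matrix.mul_assoc ρ, Matrix.mul_assoc A, trace_mul_comm A, Matrix.mul_assoc ρ]

variable [CharZero K]

theorem trace_jordanMul (A C : Matrix ι ι K) : (jordanMul A C).trace = (A * C).trace := by
  rw [jordanMul, trace_smul, trace_add, trace_mul_comm C A, smul_eq_mul]
  ring

variable {ρ : Matrix ι ι K}

theorem exists_eq_vecMulVec_of_isIdempotentElem (hρ : IsIdempotentElem ρ) (hρtr : ρ.trace = 1) :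
    ∃ u v : ι → K, ρ = vecMulVec u v := by
  classical
  have hidem : IsIdempotentElem (toLin' ρ) := hρ.map (toLinAlgEquiv' (R := K) (n := ι))
  have hrank : Module.finrank K (LinearMap.range (toLin' ρ)) = 1 := by
    have htr := (LinearMap.IsIdempotentElem.isProj_range _ hidem).trace
    rw [trace_toLin'_eq, hρtr] at htr
    exact_mod_cast htr.symm
  obtain ⟨u, -, hu⟩ := finrank_eq_one_iff'.mp hrank
  choose v hv using fun j => hu ⟨ρ.col j, Pi.single j 1, by simp⟩
  refine ⟨u, v, ?_⟩
  ext i j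
  have hij := congrFun (congrArg Subtype.val (hv j)) i
  simpa [vecMulVec_apply, mul_comm] using hij.symm

theorem trace_mul_mul_mul_of_isIdempotentElem (hρ : IsIdempotentElem ρ) (hρtr : ρ.trace = 1)
    (A C : Matrix ι ι K) : (ρ * A * (ρ * C)).trace = (ρ * A).trace * (ρ * C).trace := by
  obtain ⟨u, v, rfl⟩ := exists_eq_vecMulVec_of_isIdempotentElem hρ hρtr
  rw [vecMulVec_mul u v A, vecMulVec_mul u v C, vecMulVec_mul_vecMulVec, trace_vecMulVec,
    trace_vecMulVec, trace_vecMulVec, dotProduct_smul, smul_eq_mul, dotProduct_comm u (v ᵥ* A)]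

theorem trace_jordanMul_mul_jordanMul [DecidableEq ι] (hρ : IsIdempotentElem ρ)
    (hρtr : ρ.trace = 1) {A : Matrix ι ι K} (hA : A * A = 1) :
    (jordanMul ρ A * jordanMul ρ A).trace = ((ρ * A).trace ^ 2 + 1) / 2 := by
  have hcross : (ρ * A * (ρ * A)).trace = (ρ * A).trace ^ 2 := by
    rw [trace_mul_mul_mul_of_isIdempotentElem hρ hρtr, sq]
  have hcross' : (A * ρ * (A * ρ)).trace = (ρ * A).trace ^ 2 := by
    rw [← hcross, Matrix.mul_assoc A, trace_mul_comm A, ← Matrix.mul_assoc, Matrix.mul_assoc]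
  have hsandwich : (ρ * A * (A * ρ)).trace = 1 := by
    rw [Matrix.mul_assoc, ← Matrix.mul_assoc A, hA, Matrix.one_mul, hρ.eq, hρtr]
  rw [jordanMul, smul_mul_smul_comm, trace_smul, add_mul, mul_add, mul_add, trace_add, trace_add,
    trace_add, hcross, hcross', hsandwich, trace_mul_comm (A * ρ), hsandwich, smul_eq_mul]
  ring

end RankOne

section TraceZero

variable {ι R : Type*} [Fintype ι] [Semiring R]

theorem nonempty_of_trace_ne_zero {A : Matrix ι ι R} (hA : A.trace ≠ 0) : Nonempty ι := by
  by_contra h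
  rw [not_nonempty_iff] at h
  exact hA (by simp [trace])

theorem nontrivial_of_trace_eq_zero_of_mul_self_eq_one [DecidableEq ι] [Nonempty ι] [Nontrivial R]
    {A : Matrix ι ι R} (hA : A.trace = 0) (hAA : A * A = 1) : Nontrivial ι := by
  by_contra h
  rw [not_nontrivial_iff_subsingleton] at h
  obtain ⟨i⟩ := ‹Nonempty ι›
  rw [trace, Fintype.sum_subsingleton _ i, diag_apply] at hA
  have hii := congrFun (congrFun hAA i) i
  rw [mul_apply, Fintype.sum_subsingleton _ i, hA, zero_mul, one_apply_eq] at hii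
  exact zero_ne_one hii

end TraceZero

section SelfAdjointExt

variable {A E : Type*} [AddCommGroup A] [Module ℂ A] [StarAddMonoid A] [StarModule ℂ A]
  [AddCommGroup E] [Module ℂ E]

theorem bilin_ext_of_isSelfAdjoint {S T : A →ₗ[ℂ] A →ₗ[ℂ] E} (hS : ∀ x y, S x y = S y x)
    (hT : ∀ x y, T x y = T y x) (h : ∀ x, IsSelfAdjoint x → S x x = T x x) : S = T := by
  refine LinearMap.ext_on span_selfAdjoint fun x hx =>
    LinearMap.ext_on span_selfAdjoint fun y hy => ?_
  have hadd := h (x + y) (IsSelfAdjoint.add hx hy)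
  simp only [map_add, LinearMap.add_apply, h x hx, h y hy, hS y x, hT y x] at hadd
  linear_combination (norm := module) (1 / 2 : ℂ) • hadd

end SelfAdjointExt

section UnitaryInvariants

open Unitary

variable {ι : Type*} [Fintype ι] [DecidableEq ι]

theorem exists_conjStarAlgAut_eq_submatrix (σ : Equiv.Perm ι) :
    ∃ W : unitaryGroup ι ℂ, ∀ M, conjStarAlgAut ℂ _ W M = M.submatrix σ σ := by
  refine ⟨⟨σ.permMatrix ℂ, mem_unitaryGroup_iff.mpr ?_⟩, fun M => ?_⟩
  · rw [star_eq_conjTranspose, conjTranspose_permMatrix, ← permMatrix_mul, inv_mul_cancel,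
      permMatrix_one]
  · change σ.permMatrix ℂ * M * (σ.permMatrix ℂ)ᴴ = _
    rw [conjTranspose_permMatrix]
    simp only [Equiv.Perm.permMatrix, PEquiv.toMatrix_toPEquiv_mul,
      PEquiv.mul_toMatrix_toPEquiv, submatrix_submatrix]
    rfl

theorem exists_conjStarAlgAut_single (σ : Equiv.Perm ι) :
    ∃ W : unitaryGroup ι ℂ, ∀ i j c,
      conjStarAlgAut ℂ _ W (single i j c) = single (σ i) (σ j) c := by
  obtain ⟨W, hW⟩ := exists_conjStarAlgAut_eq_submatrix σ⁻¹
  exact ⟨W, fun i j c => by rw [hW, submatrix_single_equiv]; rfl⟩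

theorem diagonal_eq_sum_smul_single {R : Type*} [Semiring R] (D : ι → R) :
    diagonal D = ∑ i, D i • single i i (1 : R) := by
  simp only [smul_single, smul_eq_mul, mul_one, sum_single_eq_diagonal]

theorem card_mul_eq_mul_trace_of_conj_invariant {L : Matrix ι ι ℂ →ₗ[ℂ] ℂ}
    (hL : ∀ (W : unitaryGroup ι ℂ) M, L (conjStarAlgAut ℂ _ W M) = L M) (M : Matrix ι ι ℂ) :
    Fintype.card ι * L M = L 1 * M.trace := by
  have hsingle (i j : ι) : L (single i i 1) = L (single j j 1) := by
    obtain ⟨W, hW⟩ := exists_conjStarAlgAut_single (Equiv.swap i j)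
    rw [← hL W, hW, Equiv.swap_apply_left]
  have hone (i : ι) : L 1 = Fintype.card ι * L (single i i 1) := by
    rw [← diagonal_one, diagonal_eq_sum_smul_single]
    simp [hsingle _ i]
  have hdiag (D : ι → ℂ) : Fintype.card ι * L (diagonal D) = L 1 * (diagonal D).trace := by
    rw [diagonal_eq_sum_smul_single, map_sum, trace_sum, Finset.mul_sum, Finset.mul_sum]
    refine Finset.sum_congr rfl fun i _ => ?_
    rw [map_smul, trace_smul, trace_single_eq_same, hone i, smul_eq_mul, smul_eq_mul]
    ring
  suffices h : (Fintype.card ι : ℂ) • L = L 1 • traceLinearMap ι ℂ ℂ from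
    LinearMap.congr_fun h M
  refine LinearMap.ext_on span_selfAdjoint fun H hH => ?_
  rw [IsHermitian.spectral_theorem (A := H) hH]
  simp only [LinearMap.smul_apply, hL, smul_eq_mul, traceLinearMap_apply, trace_map', hdiag]

theorem sq_card_sub_one_ne_zero {κ : Type*} [Fintype κ] [Nontrivial κ] :
    (Fintype.card κ : ℂ) ^ 2 - 1 ≠ 0 := by
  rw [sub_ne_zero]
  exact_mod_cast (Nat.one_lt_pow two_ne_zero Fintype.one_lt_card).ne'

section Bilinear

variable {S : Matrix ι ι ℂ →ₗ[ℂ] Matrix ι ι ℂ →ₗ[ℂ] ℂ}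

theorem exists_bilin_single_single_of_conj_invariant [Nontrivial ι]
    (hinv : ∀ (W : unitaryGroup ι ℂ) M N,
      S (conjStarAlgAut ℂ _ W M) (conjStarAlgAut ℂ _ W N) = S M N) :
    ∃ p q : ℂ, ∀ i k, S (single i i 1) (single k k 1) = (if i = k then p else 0) + q := by
  have hperm (σ : Equiv.Perm ι) (i k : ι) :
      S (single (σ i) (σ i) 1) (single (σ k) (σ k) 1) = S (single i i 1) (single k k 1) := by
    obtain ⟨W, hW⟩ := exists_conjStarAlgAut_single σ
    rw [← hinv W (single i i 1), hW, hW]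
  obtain ⟨a, b, hab⟩ := exists_pair_ne ι
  refine ⟨S (single a a 1) (single a a 1) - S (single a a 1) (single b b 1),
    S (single a a 1) (single b b 1), fun i k => ?_⟩
  split_ifs with hik
  · rw [← hik, sub_add_cancel, ← hperm (Equiv.swap a i) a a, Equiv.swap_apply_left]
  · obtain ⟨σ, rfl, rfl⟩ := MulAction.is_two_pretransitive_iff.mp
      (Equiv.Perm.isMultiplyPretransitive ι 2) hab hik
    rw [zero_add]
    exact hperm σ a b

theorem exists_bilin_eq_of_conj_invariant [Nontrivial ι] (hsymm : ∀ M N, S M N = S N M)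
    (hinv : ∀ (W : unitaryGroup ι ℂ) M N,
      S (conjStarAlgAut ℂ _ W M) (conjStarAlgAut ℂ _ W N) = S M N) :
    ∃ p q : ℂ, ∀ M N, S M N = p * (M * N).trace + q * (M.trace * N.trace) := by
  obtain ⟨p, q, hpq⟩ := exists_bilin_single_single_of_conj_invariant hinv
  let T : Matrix ι ι ℂ →ₗ[ℂ] Matrix ι ι ℂ →ₗ[ℂ] ℂ :=
    p • (LinearMap.mul ℂ (Matrix ι ι ℂ)).compr₂ (traceLinearMap ι ℂ ℂ) +
      q • LinearMap.BilinForm.linMulLin (traceLinearMap ι ℂ ℂ) (traceLinearMap ι ℂ ℂ)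
  have hT (M N : Matrix ι ι ℂ) : T M N = p * (M * N).trace + q * (M.trace * N.trace) := rfl
  have hdiag (D : ι → ℂ) : S (diagonal D) (diagonal D) = T (diagonal D) (diagonal D) := by
    have hS : S (diagonal D) (diagonal D) =
        ∑ i, ∑ k, D i * (D k * ((if k = i then p else 0) + q)) := by
      simp only [diagonal_eq_sum_smul_single, map_sum, map_smul, LinearMap.sum_apply,
        LinearMap.smul_apply, hpq, smul_eq_mul, Finset.mul_sum]
    rw [hS, hT, diagonal_mul_diagonal, trace_diagonal, trace_diagonal, Finset.sum_mul_sum]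
    simp only [mul_add, Finset.sum_add_distrib, mul_ite, mul_zero, Finset.sum_ite_eq',
      Finset.mem_univ, if_true, Finset.mul_sum]
    congr 1
    · exact Finset.sum_congr rfl fun i _ => by ring
    · exact Finset.sum_congr rfl fun i _ => Finset.sum_congr rfl fun k _ => by ring
  suffices h : S = T from ⟨p, q, fun M N => by rw [h, hT]⟩
  refine bilin_ext_of_isSelfAdjoint hsymm (fun M N => ?_) fun H hH => ?_
  · rw [hT, hT, trace_mul_comm, mul_comm M.trace]
  · rw [IsHermitian.spectral_theorem (A := H) hH, hinv, hdiag, hT, hT, ← map_mul, trace_map',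
      trace_map']

theorem bilin_eq_of_conj_invariant [Nontrivial ι] (hsymm : ∀ M N, S M N = S N M)
    (hinv : ∀ (W : unitaryGroup ι ℂ) M N,
      S (conjStarAlgAut ℂ _ W M) (conjStarAlgAut ℂ _ W N) = S M N) {d σ : ℂ}
    (hd : d = Fintype.card ι) (hσ : σ = ∑ k, ∑ l, S (single k l 1) (single l k 1))
    (M N : Matrix ι ι ℂ) :
    S M N = ((d * σ - S 1 1) * (M * N).trace + (d * S 1 1 - σ) * (M.trace * N.trace)) /
      (d * (d ^ 2 - 1)) := by
  obtain ⟨p, q, hpq⟩ := exists_bilin_eq_of_conj_invariant hsymm hinv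
  have hone : S 1 1 = p * d + q * d ^ 2 := by
    rw [hpq, one_mul, trace_one, hd, sq]
  have hsum : σ = p * d ^ 2 + q * d := by
    have hterm (k l : ι) : S (single k l 1) (single l k 1) = p + if k = l then q else 0 := by
      rw [hpq, single_mul_single_same, trace_single_eq_same]
      obtain rfl | hkl := eq_or_ne k l
      · simp
      · simp [hkl, trace_single_eq_of_ne]
    simp only [hσ, hterm, Finset.sum_add_distrib, Finset.sum_ite_eq, Finset.mem_univ, if_true,
      Finset.sum_const, Finset.card_univ, nsmul_eq_mul, hd]
    ring
  have hd0 : d ≠ 0 := hd ▸ Nat.cast_ne_zero.mpr Fintype.card_ne_zero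
  have hd1 : d ^ 2 - 1 ≠ 0 := hd ▸ sq_card_sub_one_ne_zero
  rw [hpq, hone, hsum]
  field_simp
  ring

end Bilinear

end UnitaryInvariants

section CompactGroup

variable {G : Type*} [TopologicalSpace G] [MeasurableSpace G] (μ : Measure G)

theorem integrable_of_continuous_of_compactSpace [CompactSpace G] [OpensMeasurableSpace G]
    [IsFiniteMeasureOnCompacts μ] {E : Type*} [NormedAddCommGroup E] {f : G → E}
    (hf : Continuous f) : Integrable f μ :=
  hf.integrable_of_hasCompactSupport (HasCompactSupport.of_compactSpace f)

theorem isMulRightInvariant_of_isHaarMeasure_of_isProbabilityMeasure [Group G]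
    [IsTopologicalGroup G] [LocallyCompactSpace G] [BorelSpace G] [μ.IsHaarMeasure]
    [IsProbabilityMeasure μ] : μ.IsMulRightInvariant where
  map_mul_right_eq_self g :=
    have : IsProbabilityMeasure (μ.map (· * g)) := Measure.isProbabilityMeasure_map (by fun_prop)
    Measure.isHaarMeasure_eq_of_isProbabilityMeasure (μ.map (· * g)) μ

end CompactGroup

section UnitaryGroup

variable {ι : Type*} [Fintype ι] [DecidableEq ι]

instance : CompactSpace (unitaryGroup ι ℂ) := by
  refine isCompact_iff_compactSpace.mp (IsCompact.of_isClosed_subset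
    (isCompact_univ_pi fun _ => isCompact_univ_pi fun _ => isCompact_closedBall (0 : ℂ) 1)
    isClosed_unitary fun U hU i _ j _ => ?_)
  simpa using entry_norm_bound_of_unitary hU i j

instance : SecondCountableTopology (unitaryGroup ι ℂ) :=
  have : SecondCountableTopology (Matrix ι ι ℂ) :=
    inferInstanceAs (SecondCountableTopology (ι → ι → ℂ))
  inferInstanceAs (SecondCountableTopology (unitaryGroup ι ℂ : Set (Matrix ι ι ℂ)))

/-- The observable `B` in the Heisenberg picture, `U† B U`. -/
def heisenberg (B : Matrix ι ι ℂ) (U : unitaryGroup ι ℂ) : Matrix ι ι ℂ :=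
  star (U : Matrix ι ι ℂ) * B * U

variable (B : Matrix ι ι ℂ)

theorem heisenberg_eq_conjStarAlgAut (U : unitaryGroup ι ℂ) :
    heisenberg B U = Unitary.conjStarAlgAut ℂ _ (star U) B :=
  (Unitary.conjStarAlgAut_star_apply U B).symm

@[fun_prop]
theorem continuous_heisenberg : Continuous (heisenberg B) := by
  unfold heisenberg
  fun_prop

theorem trace_heisenberg (U : unitaryGroup ι ℂ) : (heisenberg B U).trace = B.trace := by
  rw [heisenberg_eq_conjStarAlgAut, trace_map']

theorem heisenberg_mul_heisenberg (C : Matrix ι ι ℂ) (U : unitaryGroup ι ℂ) :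
    heisenberg B U * heisenberg C U = heisenberg (B * C) U := by
  simp only [heisenberg_eq_conjStarAlgAut, map_mul]

theorem heisenberg_one (U : unitaryGroup ι ℂ) : heisenberg 1 U = 1 := by
  rw [heisenberg_eq_conjStarAlgAut, map_one]

theorem trace_conjStarAlgAut_mul_heisenberg (M : Matrix ι ι ℂ) (W U : unitaryGroup ι ℂ) :
    (Unitary.conjStarAlgAut ℂ _ W M * heisenberg B U).trace =
      (M * heisenberg B (U * W)).trace := by
  rw [Unitary.conjStarAlgAut_apply, Matrix.mul_assoc, Matrix.mul_assoc, trace_mul_comm]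
  simp only [heisenberg, Submonoid.coe_mul, star_mul, Matrix.mul_assoc]

end UnitaryGroup

section HaarMoments

variable {ι : Type*} [Fintype ι] [DecidableEq ι] [MeasurableSpace (unitaryGroup ι ℂ)]
  [BorelSpace (unitaryGroup ι ℂ)] (μ : Measure (unitaryGroup ι ℂ)) (B : Matrix ι ι ℂ)

section MomentForms

variable [IsFiniteMeasure μ]

theorem integrable_trace_mul_heisenberg (M : Matrix ι ι ℂ) :
    Integrable (fun U => (M * heisenberg B U).trace) μ :=
  integrable_of_continuous_of_compactSpace μ (by fun_prop)

theorem integrable_trace_mul_heisenberg_mul_trace (M N : Matrix ι ι ℂ) :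
    Integrable (fun U => (M * heisenberg B U).trace * (N * heisenberg B U).trace) μ :=
  integrable_of_continuous_of_compactSpace μ (by fun_prop)

/-- The first moment `M ↦ E[Tr(M U† B U)]` as a linear form. -/
noncomputable def firstMomentForm : Matrix ι ι ℂ →ₗ[ℂ] ℂ where
  toFun M := ∫ U, (M * heisenberg B U).trace ∂μ
  map_add' M N := by
    simp only [Matrix.add_mul, trace_add]
    exact integral_add (integrable_trace_mul_heisenberg μ B M)
      (integrable_trace_mul_heisenberg μ B N)
  map_smul' c M := by
    simp only [smul_mul, trace_smul, integral_smul, RingHom.id_apply]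

/-- The second moment `(M, N) ↦ E[Tr(M U† B U) Tr(N U† B U)]` as a bilinear form. -/
noncomputable def secondMomentForm : Matrix ι ι ℂ →ₗ[ℂ] Matrix ι ι ℂ →ₗ[ℂ] ℂ :=
  LinearMap.mk₂ ℂ
    (fun M N => ∫ U, (M * heisenberg B U).trace * (N * heisenberg B U).trace ∂μ)
    (fun M M' N => by
      simp only [trace_add, add_mul]
      exact integral_add (integrable_trace_mul_heisenberg_mul_trace μ B M N)
        (integrable_trace_mul_heisenberg_mul_trace μ B M' N))
    (fun c M N => by simp only [trace_smul, smul_mul_assoc, integral_smul])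
    (fun M N N' => by
      simp only [Matrix.add_mul, trace_add, mul_add]
      exact integral_add (integrable_trace_mul_heisenberg_mul_trace μ B M N)
        (integrable_trace_mul_heisenberg_mul_trace μ B M N'))
    (fun c M N => by simp only [smul_mul, trace_smul, mul_smul_comm, integral_smul])

end MomentForms

variable [IsProbabilityMeasure μ]

theorem sum_secondMomentForm_single_single :
    ∑ k, ∑ l, secondMomentForm μ B (single k l 1) (single l k 1) = (B * B).trace := by
  have hterm (k l : ι) : secondMomentForm μ B (single k l 1) (single l k 1) =
      ∫ U, heisenberg B U l k * heisenberg B U k l ∂μ := by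
    simp only [secondMomentForm, LinearMap.mk₂_apply, trace_single_mul, one_smul]
  have hint (k l : ι) :
      Integrable (fun U => heisenberg B U l k * heisenberg B U k l) μ :=
    integrable_of_continuous_of_compactSpace μ (by fun_prop)
  have hsum (U : unitaryGroup ι ℂ) :
      ∑ k, ∑ l, heisenberg B U l k * heisenberg B U k l = (B * B).trace := by
    rw [← trace_heisenberg _ U, ← heisenberg_mul_heisenberg, trace, Finset.sum_comm]
    rfl
  simp only [hterm]
  simp_rw [← integral_finsetSum _ fun l _ => hint _ l]
  rw [← integral_finsetSum _ fun k _ => integrable_finsetSum _ fun l _ => hint k l]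
  simp only [hsum, integral_const, probReal_univ, one_smul]

variable [μ.IsMulRightInvariant]

theorem card_mul_integral_trace_mul_heisenberg (M : Matrix ι ι ℂ) :
    Fintype.card ι * ∫ U, (M * heisenberg B U).trace ∂μ = B.trace * M.trace := by
  have hone : firstMomentForm μ B 1 = B.trace := by
    simp [firstMomentForm, trace_heisenberg]
  rw [← hone]
  refine card_mul_eq_mul_trace_of_conj_invariant (L := firstMomentForm μ B) (fun W M => ?_) M
  simp only [firstMomentForm, LinearMap.coe_mk, AddHom.coe_mk, trace_conjStarAlgAut_mul_heisenberg]
  exact integral_mul_right_eq_self (fun U => (M * heisenberg B U).trace) W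

theorem integral_trace_mul_heisenberg_mul_trace [Nontrivial ι] {d : ℂ} (hd : d = Fintype.card ι)
    (M N : Matrix ι ι ℂ) :
    ∫ U, (M * heisenberg B U).trace * (N * heisenberg B U).trace ∂μ =
      ((d * (B * B).trace - B.trace ^ 2) * (M * N).trace +
        (d * B.trace ^ 2 - (B * B).trace) * (M.trace * N.trace)) / (d * (d ^ 2 - 1)) := by
  have hone : secondMomentForm μ B 1 1 = B.trace ^ 2 := by
    simp [secondMomentForm, trace_heisenberg, sq]
  rw [← hone]
  refine bilin_eq_of_conj_invariant (S := secondMomentForm μ B) (fun M N => ?_) (fun W M N => ?_) hd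
    (sum_secondMomentForm_single_single μ B).symm M N
  · simp only [secondMomentForm, LinearMap.mk₂_apply, mul_comm]
  · simp only [secondMomentForm, LinearMap.mk₂_apply, trace_conjStarAlgAut_mul_heisenberg]
    exact integral_mul_right_eq_self
      (fun U => (M * heisenberg B U).trace * (N * heisenberg B U).trace) W

variable {B}

theorem integral_trace_mul_heisenberg_eq_zero (hB : B.trace = 0) (M : Matrix ι ι ℂ) :
    ∫ U, (M * heisenberg B U).trace ∂μ = 0 := by
  cases isEmpty_or_nonempty ι
  · simp [trace]
  · have h := card_mul_integral_trace_mul_heisenberg μ B M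
    rw [hB, zero_mul] at h
    exact (mul_eq_zero.mp h).resolve_left (Nat.cast_ne_zero.mpr Fintype.card_ne_zero)

theorem integral_sq_trace_mul_heisenberg [Nontrivial ι] (hB : B.trace = 0) (hBB : B * B = 1)
    {d : ℂ} (hd : d = Fintype.card ι) (M : Matrix ι ι ℂ) :
    ∫ U, (M * heisenberg B U).trace ^ 2 ∂μ =
      (d * (M * M).trace - M.trace ^ 2) / (d ^ 2 - 1) := by
  have hd0 : d ≠ 0 := hd ▸ Nat.cast_ne_zero.mpr Fintype.card_ne_zero
  simp only [sq (trace _)]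
  rw [integral_trace_mul_heisenberg_mul_trace μ B hd, hB, hBB, trace_one, ← hd,
    ← mul_div_mul_left _ (d ^ 2 - 1) hd0]
  ring

theorem integral_sq_trace_mul_heisenberg_of_isIdempotentElem [Nontrivial ι] (hB : B.trace = 0)
    (hBB : B * B = 1) {ρ : Matrix ι ι ℂ} (hρ : IsIdempotentElem ρ) (hρtr : ρ.trace = 1) {d : ℂ}
    (hd : d = Fintype.card ι) : ∫ U, (ρ * heisenberg B U).trace ^ 2 ∂μ = 1 / (d + 1) := by
  have hfactor : d ^ 2 - 1 = (d - 1) * (d + 1) := by ring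
  have hne : (d - 1) * (d + 1) ≠ 0 := hfactor ▸ hd ▸ sq_card_sub_one_ne_zero
  rw [integral_sq_trace_mul_heisenberg μ hB hBB hd, hρ.eq, hρtr, mul_one, one_pow, hfactor,
    div_mul_cancel_left₀ (left_ne_zero_of_mul hne), one_div]

end HaarMoments

section AldKernel

variable {ι : Type*} [Fintype ι] [DecidableEq ι]

/-- The kernel term `X(U, V) = ½ Tr[ρ {U† B U, V† B V}]` for an arbitrary observable `B` in any
finite dimension. -/
noncomputable def aldKernel (ρ B : Matrix ι ι ℂ) (U V : unitaryGroup ι ℂ) : ℂ :=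
  1 / 2 * (ρ * (heisenberg B U * heisenberg B V + heisenberg B V * heisenberg B U)).trace

theorem aldKernel_eq_trace_jordanMul_mul (ρ B : Matrix ι ι ℂ) (U V : unitaryGroup ι ℂ) :
    aldKernel ρ B U V = (jordanMul ρ (heisenberg B U) * heisenberg B V).trace :=
  (trace_jordanMul_mul _ _ _).symm

theorem continuous_aldKernel (ρ B : Matrix ι ι ℂ) :
    Continuous fun p : unitaryGroup ι ℂ × unitaryGroup ι ℂ => aldKernel ρ B p.1 p.2 := by
  unfold aldKernel
  fun_prop

variable [MeasurableSpace (unitaryGroup ι ℂ)] [BorelSpace (unitaryGroup ι ℂ)]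
  (μ : Measure (unitaryGroup ι ℂ)) [IsProbabilityMeasure μ] [μ.IsMulRightInvariant]
  {ρ B : Matrix ι ι ℂ}

theorem integral_aldKernel_right (hB : B.trace = 0) (U : unitaryGroup ι ℂ) :
    ∫ V, aldKernel ρ B U V ∂μ = 0 := by
  simp only [aldKernel_eq_trace_jordanMul_mul]
  exact integral_trace_mul_heisenberg_eq_zero μ hB _

theorem integral_sq_aldKernel_right [Nontrivial ι] (hB : B.trace = 0) (hBB : B * B = 1)
    (hρ : IsIdempotentElem ρ) (hρtr : ρ.trace = 1) {d : ℂ} (hd : d = Fintype.card ι)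
    (U : unitaryGroup ι ℂ) :
    ∫ V, aldKernel ρ B U V ^ 2 ∂μ =
      d / (2 * (d ^ 2 - 1)) + (d - 2) / (2 * (d ^ 2 - 1)) * (ρ * heisenberg B U).trace ^ 2 := by
  have hsq : heisenberg B U * heisenberg B U = 1 := by
    rw [heisenberg_mul_heisenberg, hBB, heisenberg_one]
  simp only [aldKernel_eq_trace_jordanMul_mul]
  rw [integral_sq_trace_mul_heisenberg μ hB hBB hd, trace_jordanMul,
    trace_jordanMul_mul_jordanMul hρ hρtr hsq, mul_comm (2 : ℂ), ← div_div, ← div_div]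
  ring

theorem haar_moments_ald_kernel_term_general (hB : B.trace = 0) (hBB : B * B = 1)
    (hρ : IsIdempotentElem ρ) (hρtr : ρ.trace = 1) {d : ℂ} (hd : d = Fintype.card ι) :
    ∫ p, aldKernel ρ B p.1 p.2 ∂(μ.prod μ) = 0 ∧
    ∫ p, aldKernel ρ B p.1 p.2 ^ 2 ∂(μ.prod μ) =
      d / (2 * (d ^ 2 - 1)) * (1 + (d - 2) / (d * (d + 1))) := by
  have hX := continuous_aldKernel ρ B
  have : Nonempty ι := nonempty_of_trace_ne_zero (hρtr ▸ one_ne_zero)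
  have : Nontrivial ι := nontrivial_of_trace_eq_zero_of_mul_self_eq_one hB hBB
  have hd0 : d ≠ 0 := hd ▸ Nat.cast_ne_zero.mpr Fintype.card_ne_zero
  constructor
  · rw [integral_prod _ (integrable_of_continuous_of_compactSpace _ hX)]
    simp only [integral_aldKernel_right μ hB, integral_zero]
  · rw [integral_prod (fun p => aldKernel ρ B p.1 p.2 ^ 2)
      (integrable_of_continuous_of_compactSpace _ (hX.pow 2))]
    simp only [integral_sq_aldKernel_right μ hB hBB hρ hρtr hd]
    rw [integral_add (integrable_const _)
        (integrable_of_continuous_of_compactSpace _ (by fun_prop)), integral_const,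
      integral_const_mul, integral_sq_trace_mul_heisenberg_of_isIdempotentElem μ hB hBB hρ hρtr hd,
      probReal_univ, one_smul]
    field_simp

end AldKernel

/-- For a nonidentity Pauli string `B` on `n` qubits, a pure state `ρ₀`,
and independent Haar-random `U, V ∈ U(2ⁿ)`, the quantity
`X(U,V) = (1/2)Tr[ρ₀ {U† B U, V† B V}]` satisfies `E[X] = 0` and
`E[X²] = (2ⁿ/(2(2^{2n}−1)))·(1 + (2ⁿ−2)/(2ⁿ(2ⁿ+1)))`. -/
theorem haar_moments_ald_kernel_term (n : ℕ) (s : Fin n → Fin 4)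
    (hs : ∃ q, s q ≠ 0)
    [MeasurableSpace (Matrix.unitaryGroup (Fin n → Fin 2) ℂ)]
    [BorelSpace (Matrix.unitaryGroup (Fin n → Fin 2) ℂ)]
    (μ : Measure (Matrix.unitaryGroup (Fin n → Fin 2) ℂ))
    [μ.IsHaarMeasure] [IsProbabilityMeasure μ]
    (ρ₀ : Matrix (Fin n → Fin 2) (Fin n → Fin 2) ℂ)
    (hρ : ρ₀.PosSemidef) (hρtr : ρ₀.trace = 1) (hρpure : ρ₀ * ρ₀ = ρ₀) :
    (∫ p : Matrix.unitaryGroup (Fin n → Fin 2) ℂ × Matrix.unitaryGroup (Fin n → Fin 2) ℂ,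
        aldTerm s ρ₀ (p.1 : _) (p.2 : _) ∂(μ.prod μ)) = 0 ∧
    (∫ p : Matrix.unitaryGroup (Fin n → Fin 2) ℂ × Matrix.unitaryGroup (Fin n → Fin 2) ℂ,
        (aldTerm s ρ₀ (p.1 : _) (p.2 : _)) ^ 2 ∂(μ.prod μ))
      = ((2 : ℂ) ^ n / (2 * ((2 : ℂ) ^ (2 * n) - 1))) *
          (1 + ((2 : ℂ) ^ n - 2) / ((2 : ℂ) ^ n * ((2 : ℂ) ^ n + 1))) := by
  have := isMulRightInvariant_of_isHaarMeasure_of_isProbabilityMeasure μ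
  rw [pow_mul' (2 : ℂ) 2 n]
  exact haar_moments_ald_kernel_term_general μ (trace_pauliString_eq_zero s hs)
    (pauliString_mul_self s) hρpure hρtr (by simp)
end

section
/- Let W be Haar-random on the unitary group of a d-dimensional factor S_s, where S_s = S_h ⊗ S_h̄ with S_h ⊂ S' and S_h̄ ⊂ S̄' each of dimension d^{1/2}. Then for any operator A on the full space S' ⊗ S̄', E_W[Tr[Tr_{S̄'}[W A W†] Tr_{S̄'}[W A W†]]] = (d^{1/2}/(d+1))·(Tr[Tr_{S̄'∪S_h}[A] Tr_{S̄'∪S_h}[A]] + Tr[Tr_{S̄'/S_h̄}[A] Tr_{S̄'/S_h̄}[A]]). -/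
open MeasureTheory Matrix

section

variable {α β γ δ : Type*} [Fintype α] [DecidableEq α] [Fintype β] [DecidableEq β]
    [Fintype γ] [DecidableEq γ] [Fintype δ] [DecidableEq δ]

/-- Embed an operator `W` on `S_s = S_h ⊗ S_h̄` (the factors `α` and `γ`) into the full space
`S' ⊗ S̄' = (α × β) × (γ × δ)`, acting as the identity on `β` and `δ`. -/
noncomputable def embedStraddle (W : Matrix (α × γ) (α × γ) ℂ) :
    Matrix ((α × β) × (γ × δ)) ((α × β) × (γ × δ)) ℂ :=
  fun p q => W (p.1.1, p.2.1) (q.1.1, q.2.1) *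
    (if p.1.2 = q.1.2 then (1 : ℂ) else 0) * (if p.2.2 = q.2.2 then (1 : ℂ) else 0)

/-- Partial trace over `S̄' = γ × δ`. -/
noncomputable def ptrSbar (M : Matrix ((α × β) × (γ × δ)) ((α × β) × (γ × δ)) ℂ) :
    Matrix (α × β) (α × β) ℂ :=
  fun i j => ∑ k : γ × δ, M (i, k) (j, k)

/-- Partial trace over `S̄' ∪ S_h`, i.e. over `(γ × δ)` and `α`. -/
noncomputable def ptrSbarCupSh (M : Matrix ((α × β) × (γ × δ)) ((α × β) × (γ × δ)) ℂ) :
    Matrix β β ℂ :=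
  fun i j => ∑ a : α, ∑ k : γ × δ, M ((a, i), k) ((a, j), k)

/-- Partial trace over `S̄' / S_h̄`, i.e. over `δ` only. -/
noncomputable def ptrSbarDiffShbar (M : Matrix ((α × β) × (γ × δ)) ((α × β) × (γ × δ)) ℂ) :
    Matrix ((α × β) × γ) ((α × β) × γ) ℂ :=
  fun p q => ∑ e : δ, M (p.1, (p.2, e)) (q.1, (q.2, e))

end

/-!
The trick is to double the space. With `F` the swap of the `S_h` factors of `S_s ⊗ S_s` and `S` the
full swap, the three purities are `Tr[F D]`, `Tr[D]` and `Tr[S D]` for one operator `D` on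
`S_s ⊗ S_s`, which is quadratic in `A` and is conjugated by `W ⊗ W` when `A` is conjugated by `W`.
So the expectation is `Tr[F T]`, with `T` the Haar average of `(W ⊗ W) D (W ⊗ W)†`. That average
commutes with every `W ⊗ W`; differentiating along `W = exp (i t H)` and complexifying, it commutes
with `M ⊗ N + N ⊗ M` for all matrices `M`, `N`, and comparing entries shows that it lies in the span
of `1` and `S`. Finally `Tr[T] = Tr[D]` and `Tr[S T] = Tr[S D]`, because `1` and `S` commute with
`W ⊗ W`, and these two traces determine `Tr[F T]`.
-/

open scoped Kronecker

section Swap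

/-- The swap operator `x ⊗ y ↦ y ⊗ x` on `R^I ⊗ R^I`, as a permutation matrix. -/
def swapMatrix (I R : Type*) [DecidableEq I] [Zero R] [One R] : Matrix (I × I) (I × I) R :=
  Equiv.Perm.permMatrix R (Equiv.prodComm I I)

variable {I R : Type*} [DecidableEq I]

lemma trace_swapMatrix [Fintype I] [AddCommMonoidWithOne R] :
    (swapMatrix I R).trace = Fintype.card I := by
  simp [trace, swapMatrix, Fintype.sum_prod_type, Prod.ext_iff, ite_and]

variable [Fintype I]

lemma swapMatrix_mul [NonAssocSemiring R] (M : Matrix (I × I) (I × I) R) :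
    swapMatrix I R * M = M.submatrix Prod.swap id :=
  PEquiv.toMatrix_toPEquiv_mul (Equiv.prodComm I I) M

lemma mul_swapMatrix [NonAssocSemiring R] (M : Matrix (I × I) (I × I) R) :
    M * swapMatrix I R = M.submatrix id Prod.swap :=
  PEquiv.mul_toMatrix_toPEquiv M (Equiv.prodComm I I)

lemma swapMatrix_mul_self [Semiring R] : swapMatrix I R * swapMatrix I R = 1 := by
  rw [swapMatrix, ← Matrix.permMatrix_mul, ← Matrix.permMatrix_one]
  rfl

lemma trace_swapMatrix_mul_kronecker [NonAssocSemiring R] (M N : Matrix I I R) :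
    (swapMatrix I R * (M ⊗ₖ N)).trace = (M * N).trace := by
  rw [swapMatrix_mul]
  simp only [trace, diag, submatrix_apply, kroneckerMap_apply, mul_apply, Fintype.sum_prod_type,
    Prod.swap_prod_mk, id_eq]
  exact Finset.sum_comm

lemma commute_swapMatrix_kronecker_self [CommSemiring R] (M : Matrix I I R) :
    Commute (swapMatrix I R) (M ⊗ₖ M) := by
  ext p q
  simp [swapMatrix_mul, mul_swapMatrix, mul_comm]

-- These are the matrix entries of the hypothesis for `M`, `N` matrix units.
lemma apply_add_ite_apply_swap_of_commute [Semiring R] {T : Matrix (I × I) (I × I) R}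
    (hT : ∀ M N : Matrix I I R, Commute T (M ⊗ₖ N + N ⊗ₖ M)) (p q r : I × I) :
    T r p + (if q = q.swap then T r p.swap else 0) =
      (if r = p then T q q else 0) + if r = p.swap then T q.swap q else 0 := by
  have h := congr_fun₂ (hT (single p.1 q.1 1) (single p.2 q.2 1)).eq r q
  simpa [single_kronecker_single, mul_add, add_mul, mul_apply, single_apply, ite_and, eq_comm,
    Prod.swap, Finset.sum_add_distrib] using h

lemma exists_eq_smul_one_add_smul_swapMatrix [Semiring R] {T : Matrix (I × I) (I × I) R}
    (hT : ∀ M N : Matrix I I R, Commute T (M ⊗ₖ N + N ⊗ₖ M)) :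
    ∃ a b : R, T = a • (1 : Matrix (I × I) (I × I) R) + b • swapMatrix I R := by
  rcases subsingleton_or_nontrivial I with hI | hI
  · refine ⟨∑ p, T p p, 0, ?_⟩
    ext p q
    obtain rfl := Subsingleton.elim p q
    simp [Fintype.sum_subsingleton _ p]
  · obtain ⟨x, y, hxy⟩ := exists_pair_ne I
    have hq : (x, y) ≠ (x, y).swap := fun h => hxy (congr_arg Prod.fst h)
    refine ⟨T (x, y) (x, y), T (y, x) (x, y), ?_⟩
    ext r p
    -- Off the diagonal the second term on the left vanishes, and the equation computes `T r p`.
    have h := apply_add_ite_apply_swap_of_commute hT p (x, y) r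
    rw [if_neg hq, add_zero] at h
    simp [h, swapMatrix, one_apply, Prod.swap_eq_iff_eq_swap]

end Swap

section PartialSwap

/-- The permutation exchanging the `α`-components of two elements of `α × γ`; it underlies
`swapFstMatrix`. -/
def swapFst (α γ : Type*) : Equiv.Perm ((α × γ) × (α × γ)) :=
  Function.Involutive.toPerm (fun p => ((p.2.1, p.1.2), (p.1.1, p.2.2))) fun _ => rfl

/-- The operator on two copies of `R^α ⊗ R^γ` that swaps the two factors `R^α`. -/
def swapFstMatrix (α γ R : Type*) [DecidableEq α] [DecidableEq γ] [Zero R] [One R] :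
    Matrix ((α × γ) × (α × γ)) ((α × γ) × (α × γ)) R :=
  Equiv.Perm.permMatrix R (swapFst α γ)

variable {α γ R : Type*} [Fintype α] [DecidableEq α] [Fintype γ] [DecidableEq γ]

lemma trace_swapFstMatrix [Semiring R] :
    (swapFstMatrix α γ R).trace = Fintype.card α * Fintype.card γ ^ 2 := by
  simp [trace, swapFstMatrix, swapFst, Fintype.sum_prod_type, Prod.ext_iff, ite_and,
    Function.Involutive.toPerm, mul_assoc, pow_two]

lemma trace_swapMatrix_mul_swapFstMatrix [CommSemiring R] :
    (swapMatrix (α × γ) R * swapFstMatrix α γ R).trace =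
      Fintype.card α ^ 2 * Fintype.card γ := by
  rw [swapMatrix_mul]
  simp [trace, swapFstMatrix, swapFst, Fintype.sum_prod_type, Prod.ext_iff, ite_and,
    Function.Involutive.toPerm]
  ring

lemma trace_swapFstMatrix_mul_kronecker [NonAssocSemiring R] (M N : Matrix (α × γ) (α × γ) R) :
    (swapFstMatrix α γ R * (M ⊗ₖ N)).trace =
      ∑ a, ∑ a', (∑ c, M (a, c) (a', c)) * ∑ c, N (a', c) (a, c) := by
  rw [swapFstMatrix, PEquiv.toMatrix_toPEquiv_mul]
  simp only [trace, diag, submatrix_apply, kroneckerMap_apply, Fintype.sum_prod_type, id_eq,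
    Finset.sum_mul_sum]
  conv_rhs => rw [Finset.sum_comm]
  exact Finset.sum_congr rfl fun a _ => Finset.sum_comm

end PartialSwap

section TensorSquareCommutant

open scoped Matrix.Norms.L2Operator ComplexStarModule

lemma hasDerivAt_expUnitary {A : Type*} [CStarAlgebra A] (H : selfAdjoint A) :
    HasDerivAt (fun t : ℝ => (selfAdjoint.expUnitary (t • H) : A)) (Complex.I • (H : A)) 0 := by
  simpa [smul_comm Complex.I] using hasDerivAt_exp_smul_const (𝕂 := ℝ) (Complex.I • (H : A)) 0

lemma hasDerivAt_kronecker {l m n p : Type*} [Finite l] [Finite m] [Finite n] [Finite p]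
    {M : ℝ → Matrix l m ℂ} {N : ℝ → Matrix n p ℂ} {M' : Matrix l m ℂ} {N' : Matrix n p ℂ} {t : ℝ}
    (hM : HasDerivAt M M' t) (hN : HasDerivAt N N' t) :
    HasDerivAt (fun s => M s ⊗ₖ N s) (M t ⊗ₖ N' + M' ⊗ₖ N t) t := by
  classical
  cases nonempty_fintype l
  cases nonempty_fintype m
  cases nonempty_fintype n
  cases nonempty_fintype p
  exact (kroneckerBilinear (R := ℝ) (α := ℂ)).toContinuousBilinearMap.hasDerivAt_of_bilinear
    (fun _ => hM) (fun _ => hN)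

variable {I : Type*} [Fintype I] [DecidableEq I] {T : Matrix (I × I) (I × I) ℂ}

lemma commute_kronecker_one_add_one_kronecker_of_isSelfAdjoint
    (hT : ∀ U ∈ unitaryGroup I ℂ, Commute T (U ⊗ₖ U)) {H : Matrix I I ℂ} (hH : IsSelfAdjoint H) :
    Commute T (H ⊗ₖ 1 + 1 ⊗ₖ H) := by
  let V (t : ℝ) : Matrix I I ℂ := selfAdjoint.expUnitary (t • ⟨H, hH⟩ : selfAdjoint (Matrix I I ℂ))
  have hV : HasDerivAt V (Complex.I • H) 0 := hasDerivAt_expUnitary (A := Matrix I I ℂ) ⟨H, hH⟩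
  have hV0 : V 0 = 1 := by simp [V]
  have hVV : HasDerivAt (fun t => V t ⊗ₖ V t) (Complex.I • (H ⊗ₖ 1 + 1 ⊗ₖ H)) 0 := by
    have h := hasDerivAt_kronecker hV hV
    rwa [hV0, kronecker_smul, smul_kronecker, ← smul_add, add_comm] at h
  have hcomm (t : ℝ) : T * V t ⊗ₖ V t = V t ⊗ₖ V t * T := (hT _ (Subtype.prop _)).eq
  have h : Commute T (Complex.I • (H ⊗ₖ 1 + 1 ⊗ₖ H)) :=
    (hVV.const_mul T).unique (by simpa only [hcomm] using hVV.mul_const T)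
  exact (Commute.smul_right_iff₀ Complex.I_ne_zero).mp h

lemma commute_kronecker_one_add_one_kronecker
    (hT : ∀ U ∈ unitaryGroup I ℂ, Commute T (U ⊗ₖ U)) (M : Matrix I I ℂ) :
    Commute T (M ⊗ₖ 1 + 1 ⊗ₖ M) := by
  have h {H : Matrix I I ℂ} (hH : IsSelfAdjoint H) :=
    commute_kronecker_one_add_one_kronecker_of_isSelfAdjoint hT hH
  have hdecomp : M ⊗ₖ 1 + 1 ⊗ₖ M =
      ((ℜ M : Matrix I I ℂ) ⊗ₖ 1 + 1 ⊗ₖ (ℜ M : Matrix I I ℂ)) +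
        Complex.I • ((ℑ M : Matrix I I ℂ) ⊗ₖ 1 + 1 ⊗ₖ (ℑ M : Matrix I I ℂ)) := by
    conv_lhs => rw [← realPart_add_I_smul_imaginaryPart M]
    rw [add_kronecker, kronecker_add, smul_kronecker, kronecker_smul, smul_add]
    abel
  rw [hdecomp]
  exact (h (ℜ M).2).add_right ((h (ℑ M).2).smul_right Complex.I)

lemma commute_kronecker_add_kronecker
    (hT : ∀ U ∈ unitaryGroup I ℂ, Commute T (U ⊗ₖ U)) (M N : Matrix I I ℂ) :
    Commute T (M ⊗ₖ N + N ⊗ₖ M) := by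
  have h := commute_kronecker_one_add_one_kronecker hT
  have hpolar : M ⊗ₖ N + N ⊗ₖ M =
      (M ⊗ₖ 1 + 1 ⊗ₖ M) * (N ⊗ₖ 1 + 1 ⊗ₖ N) - ((M * N) ⊗ₖ 1 + 1 ⊗ₖ (M * N)) := by
    rw [mul_add, add_mul, add_mul]
    simp_rw [← mul_kronecker_mul, one_mul, mul_one]
    abel
  rw [hpolar]
  exact ((h M).mul_right (h N)).sub_right (h (M * N))

end TensorSquareCommutant

section Twirl

open scoped Matrix.Norms.L2Operator

variable {G n : Type*} [Group G] [MeasurableSpace G] [Fintype n] [DecidableEq n]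

/-- The twirl of `X` by a unitary representation `ρ`: the average over `μ` of the conjugates of `X`,
as a Bochner integral for the operator norm. -/
noncomputable def haarTwirl (μ : Measure G) (ρ : G →* unitaryGroup n ℂ) (X : Matrix n n ℂ) :
    Matrix n n ℂ :=
  ∫ g, (ρ g : Matrix n n ℂ) * X * star (ρ g : Matrix n n ℂ) ∂μ

variable [TopologicalSpace G] [CompactSpace G] [BorelSpace G] {μ : Measure G}
  {ρ : G →* unitaryGroup n ℂ}

lemma integrable_unitary_conj [IsFiniteMeasure μ] (hρ : Continuous ρ) (X : Matrix n n ℂ) :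
    Integrable (fun g => (ρ g : Matrix n n ℂ) * X * star (ρ g : Matrix n n ℂ)) μ :=
  Continuous.integrable_of_hasCompactSupport (by fun_prop) (HasCompactSupport.of_compactSpace _)

lemma map_haarTwirl [IsFiniteMeasure μ] (hρ : Continuous ρ) {E : Type*} [NormedAddCommGroup E]
    [NormedSpace ℂ E] [CompleteSpace E] (φ : Matrix n n ℂ →ₗ[ℂ] E) (X : Matrix n n ℂ) :
    φ (haarTwirl μ ρ X) = ∫ g, φ ((ρ g : Matrix n n ℂ) * X * star (ρ g : Matrix n n ℂ)) ∂μ :=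
  ((LinearMap.toContinuousLinearMap φ).integral_comp_comm (integrable_unitary_conj hρ X)).symm

lemma commute_haarTwirl [IsTopologicalGroup G] [IsFiniteMeasure μ] [μ.IsMulLeftInvariant]
    (hρ : Continuous ρ) (X : Matrix n n ℂ) (g : G) :
    Commute (haarTwirl μ ρ X) (ρ g : Matrix n n ℂ) := by
  have hconj : (ρ g : Matrix n n ℂ) * haarTwirl μ ρ X * star (ρ g : Matrix n n ℂ) =
      haarTwirl μ ρ X := by
    refine (map_haarTwirl hρ (LinearMap.mulLeftRight ℂ (_, _)) X).trans ?_
    refine Eq.trans ?_ (integral_mul_left_eq_self _ g)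
    simp [mul_assoc]
  calc haarTwirl μ ρ X * (ρ g : Matrix n n ℂ)
    _ = (ρ g : Matrix n n ℂ) * haarTwirl μ ρ X * star (ρ g : Matrix n n ℂ) * ρ g := by
      rw [hconj]
    _ = (ρ g : Matrix n n ℂ) * haarTwirl μ ρ X := by rw [mul_assoc, (ρ g).2.1, mul_one]

lemma trace_mul_haarTwirl_of_commute [IsProbabilityMeasure μ] (hρ : Continuous ρ)
    {Y : Matrix n n ℂ} (hY : ∀ g, Commute Y (ρ g : Matrix n n ℂ)) (X : Matrix n n ℂ) :
    (Y * haarTwirl μ ρ X).trace = (Y * X).trace := by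
  refine (map_haarTwirl hρ (traceLinearMap _ ℂ ℂ ∘ₗ LinearMap.mulLeft ℂ Y) X).trans ?_
  have htrace (g : G) : (Y * (ρ g * X * star (ρ g : Matrix n n ℂ))).trace = (Y * X).trace :=
    calc (Y * (ρ g * X * star (ρ g : Matrix n n ℂ))).trace
      _ = (star (ρ g : Matrix n n ℂ) * (Y * ρ g) * X).trace := by
        rw [← mul_assoc, trace_mul_comm]; simp only [mul_assoc]
      _ = (Y * X).trace := by rw [(hY g).eq, ← mul_assoc, (ρ g).2.1, one_mul]
  simp [htrace]

end Twirl

section SecondMoment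

variable {I : Type*} [Fintype I] [DecidableEq I]

/-- The representation `U ↦ U ⊗ U`, whose twirl is the second Haar moment. -/
def unitaryTensorSquare (I : Type*) [Fintype I] [DecidableEq I] :
    unitaryGroup I ℂ →* unitaryGroup (I × I) ℂ where
  toFun U := ⟨(U : Matrix I I ℂ) ⊗ₖ (U : Matrix I I ℂ), kronecker_mem_unitary U.2 U.2⟩
  map_one' := Subtype.ext one_kronecker_one
  map_mul' _ _ := Subtype.ext (mul_kronecker_mul _ _ _ _)

lemma continuous_unitaryTensorSquare : Continuous (unitaryTensorSquare I) :=
  Continuous.subtype_mk (continuous_matrix fun _ _ =>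
    (continuous_subtype_val.matrix_elem _ _).mul (continuous_subtype_val.matrix_elem _ _)) _

lemma compactSpace_unitary {A : Type*} [CStarAlgebra A] [FiniteDimensional ℂ A] :
    CompactSpace (unitary A) := by
  have := FiniteDimensional.proper ℂ A
  refine isCompact_iff_compactSpace.mp
    (Metric.isCompact_of_isClosed_isBounded isClosed_unitary ?_)
  cases subsingleton_or_nontrivial A
  · exact (Set.subsingleton_of_subsingleton (s := (unitary A : Set A))).finite.isBounded
  · exact isBounded_iff_forall_norm_le.mpr ⟨1, fun U hU => (CStarRing.norm_of_mem_unitary hU).le⟩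

open scoped Matrix.Norms.L2Operator in
instance compactSpace_unitaryGroup : CompactSpace (unitaryGroup I ℂ) :=
  compactSpace_unitary (A := Matrix I I ℂ)

variable [MeasurableSpace (unitaryGroup I ℂ)] [BorelSpace (unitaryGroup I ℂ)]
  {μ : Measure (unitaryGroup I ℂ)} [IsProbabilityMeasure μ] [μ.IsMulLeftInvariant]

lemma exists_haarTwirl_unitaryTensorSquare_eq (X : Matrix (I × I) (I × I) ℂ) :
    ∃ a b : ℂ, haarTwirl μ (unitaryTensorSquare I) X =
      a • (1 : Matrix (I × I) (I × I) ℂ) + b • swapMatrix I ℂ :=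
  exists_eq_smul_one_add_smul_swapMatrix <| commute_kronecker_add_kronecker fun U hU =>
    commute_haarTwirl continuous_unitaryTensorSquare X ⟨U, hU⟩

-- `u` and `v` are the coefficients of `1` and the swap in the twirl of `Y`. For `card I = 1`, where
-- the swap is `1`, the two equations do not determine them.
theorem trace_mul_haarTwirl_unitaryTensorSquare (X Y : Matrix (I × I) (I × I) ℂ) {u v : ℂ}
    (hY : u * (Fintype.card I : ℂ) ^ 2 + v * Fintype.card I = Y.trace)
    (hSY : u * Fintype.card I + v * (Fintype.card I : ℂ) ^ 2 = (swapMatrix I ℂ * Y).trace) :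
    (Y * haarTwirl μ (unitaryTensorSquare I) X).trace =
      u * X.trace + v * (swapMatrix I ℂ * X).trace := by
  obtain ⟨a, b, hab⟩ := exists_haarTwirl_unitaryTensorSquare_eq (μ := μ) X
  have htr : X.trace = a * (Fintype.card I : ℂ) ^ 2 + b * Fintype.card I := by
    have h := trace_mul_haarTwirl_of_commute (μ := μ) continuous_unitaryTensorSquare
      (fun _ => Commute.one_left _) X
    rw [one_mul, one_mul, hab] at h
    simpa [trace_swapMatrix, pow_two] using h.symm
  have hswap : (swapMatrix I ℂ * X).trace =
      a * Fintype.card I + b * (Fintype.card I : ℂ) ^ 2 := by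
    have h := trace_mul_haarTwirl_of_commute (μ := μ) continuous_unitaryTensorSquare
      (fun _ => commute_swapMatrix_kronecker_self _) X
    rw [hab] at h
    simpa [mul_add, swapMatrix_mul_self, trace_swapMatrix, pow_two] using h.symm
  calc (Y * haarTwirl μ (unitaryTensorSquare I) X).trace
    _ = a * Y.trace + b * (swapMatrix I ℂ * Y).trace := by
      simp [hab, mul_add, trace_mul_comm Y]
    _ = u * X.trace + v * (swapMatrix I ℂ * X).trace := by
      rw [← hY, ← hSY, htr, hswap]
      ring

end SecondMoment

section Blocks

variable {α β γ δ : Type*}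

lemma star_embedStraddle [DecidableEq β] [DecidableEq δ] (W : Matrix (α × γ) (α × γ) ℂ) :
    star (embedStraddle W : Matrix ((α × β) × (γ × δ)) ((α × β) × (γ × δ)) ℂ) =
      embedStraddle (star W) := by
  ext p q
  simp only [embedStraddle, star_apply, star_mul', apply_ite star, star_one, star_zero,
    eq_comm (a := q.1.2), eq_comm (a := q.2.2)]

variable [Fintype δ]

/-- The block `⟨b| Tr_δ A |b'⟩`, an operator on `S_s = α × γ`. -/
def blockTrace (A : Matrix ((α × β) × (γ × δ)) ((α × β) × (γ × δ)) ℂ) (b b' : β) :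
    Matrix (α × γ) (α × γ) ℂ :=
  fun p q => ∑ e, A ((p.1, b), (p.2, e)) ((q.1, b'), (q.2, e))

/-- The operator on `S_s ⊗ S_s` obtained from `A ⊗ A` by tracing out both copies of `δ` and
contracting the two copies of `β` with the swap. Each of the purities of `A` is a linear
function of it. -/
def doubledBlock [Fintype β] (A : Matrix ((α × β) × (γ × δ)) ((α × β) × (γ × δ)) ℂ) :
    Matrix ((α × γ) × (α × γ)) ((α × γ) × (α × γ)) ℂ :=
  ∑ b, ∑ b', blockTrace A b b' ⊗ₖ blockTrace A b' b

section Conjugation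

variable [Fintype α] [Fintype β] [DecidableEq β] [Fintype γ] [DecidableEq δ]

lemma embedStraddle_mul_apply (W : Matrix (α × γ) (α × γ) ℂ)
    (A : Matrix ((α × β) × (γ × δ)) ((α × β) × (γ × δ)) ℂ) (a : α) (b : β) (c : γ) (e : δ)
    (q : (α × β) × (γ × δ)) :
    (embedStraddle W * A : Matrix ((α × β) × (γ × δ)) ((α × β) × (γ × δ)) ℂ) ((a, b), (c, e)) q =
      ∑ x : α × γ, W (a, c) x * A ((x.1, b), (x.2, e)) q := by
  simp only [mul_apply, embedStraddle, Fintype.sum_prod_type, mul_ite, ite_mul, mul_one,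
    mul_zero, zero_mul, Finset.sum_ite_eq, Finset.mem_univ, if_true, Finset.sum_ite_irrel,
    Finset.sum_const_zero]

lemma mul_embedStraddle_apply (A : Matrix ((α × β) × (γ × δ)) ((α × β) × (γ × δ)) ℂ)
    (W : Matrix (α × γ) (α × γ) ℂ) (p : (α × β) × (γ × δ)) (a : α) (b : β) (c : γ) (e : δ) :
    (A * embedStraddle W : Matrix ((α × β) × (γ × δ)) ((α × β) × (γ × δ)) ℂ) p ((a, b), (c, e)) =
      ∑ x : α × γ, A p ((x.1, b), (x.2, e)) * W x (a, c) := by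
  simp only [mul_apply, embedStraddle, Fintype.sum_prod_type, mul_ite, mul_one,
    mul_zero, Finset.sum_ite_eq', Finset.mem_univ, if_true, Finset.sum_ite_irrel,
    Finset.sum_const_zero]

lemma blockTrace_embedStraddle_mul_mul_embedStraddle (V W : Matrix (α × γ) (α × γ) ℂ)
    (A : Matrix ((α × β) × (γ × δ)) ((α × β) × (γ × δ)) ℂ) (b b' : β) :
    blockTrace (embedStraddle V * A * embedStraddle W) b b' = V * blockTrace A b b' * W := by
  ext p q
  rw [mul_apply]
  simp only [blockTrace, mul_embedStraddle_apply, embedStraddle_mul_apply]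
  simp only [mul_apply, blockTrace, Finset.mul_sum]
  rw [Finset.sum_comm]
  refine Finset.sum_congr rfl fun x _ => ?_
  rw [← Finset.sum_mul, Finset.sum_comm]

lemma doubledBlock_embedStraddle_conj (W : Matrix (α × γ) (α × γ) ℂ)
    (A : Matrix ((α × β) × (γ × δ)) ((α × β) × (γ × δ)) ℂ) :
    doubledBlock (embedStraddle W * A * star (embedStraddle W)) =
      (W ⊗ₖ W) * doubledBlock A * star (W ⊗ₖ W) := by
  have hstar : star (W ⊗ₖ W) = star W ⊗ₖ star W := conjTranspose_kronecker W W
  simp only [doubledBlock, star_embedStraddle, blockTrace_embedStraddle_mul_mul_embedStraddle,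
    Finset.mul_sum, Finset.sum_mul, hstar, mul_kronecker_mul]

end Conjugation

section Purity

variable [Fintype α] [Fintype β] [Fintype γ]

lemma trace_mul_doubledBlock (Y : Matrix ((α × γ) × (α × γ)) ((α × γ) × (α × γ)) ℂ)
    (A : Matrix ((α × β) × (γ × δ)) ((α × β) × (γ × δ)) ℂ) :
    (Y * doubledBlock A).trace =
      ∑ b, ∑ b', (Y * (blockTrace A b b' ⊗ₖ blockTrace A b' b)).trace := by
  simp only [doubledBlock, Finset.mul_sum, trace_sum]

lemma trace_ptrSbarCupSh_mul_self (A : Matrix ((α × β) × (γ × δ)) ((α × β) × (γ × δ)) ℂ) :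
    (ptrSbarCupSh A * ptrSbarCupSh A).trace = (doubledBlock A).trace := by
  simp only [doubledBlock, trace_sum, trace_kronecker]
  simp only [trace, diag, mul_apply, ptrSbarCupSh, blockTrace, Fintype.sum_prod_type]

variable [DecidableEq α] [DecidableEq γ]

lemma trace_ptrSbar_mul_self (A : Matrix ((α × β) × (γ × δ)) ((α × β) × (γ × δ)) ℂ) :
    (ptrSbar A * ptrSbar A).trace = (swapFstMatrix α γ ℂ * doubledBlock A).trace := by
  have hA (a b a' b') : ptrSbar A (a, b) (a', b') = ∑ c, blockTrace A b b' (a, c) (a', c) :=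
    Fintype.sum_prod_type _
  simp only [trace_mul_doubledBlock, trace_swapFstMatrix_mul_kronecker]
  simp only [trace, diag, mul_apply, Fintype.sum_prod_type_right, hA]
  exact Finset.sum_congr rfl fun b _ => Finset.sum_comm

lemma trace_ptrSbarDiffShbar_mul_self (A : Matrix ((α × β) × (γ × δ)) ((α × β) × (γ × δ)) ℂ) :
    (ptrSbarDiffShbar A * ptrSbarDiffShbar A).trace =
      (swapMatrix (α × γ) ℂ * doubledBlock A).trace := by
  have hA (a b c a' b' c') : ptrSbarDiffShbar A ((a, b), c) ((a', b'), c') =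
      blockTrace A b b' (a, c) (a', c') := rfl
  have hsum (f : (α × β) × γ → ℂ) : ∑ p, f p = ∑ b, ∑ x : α × γ, f ((x.1, b), x.2) := by
    simp only [Fintype.sum_prod_type]
    exact Finset.sum_comm
  simp only [trace_mul_doubledBlock, trace_swapMatrix_mul_kronecker]
  simp only [trace, diag, mul_apply, hsum, hA]
  exact Finset.sum_congr rfl fun b _ => Finset.sum_comm

end Purity

end Blocks

/-- Unless `α` and `γ` are both singletons, `u` and `v` are the Weingarten weights
`a (c² - 1) / (a² c² - 1)` and `c (a² - 1) / (a² c² - 1)`, with `a = card α` and `c = card γ`. -/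
theorem haar_expectation_straddling_purity_general
    {α β γ δ : Type*} [Fintype α] [DecidableEq α] [Fintype β] [DecidableEq β]
    [Fintype γ] [DecidableEq γ] [Fintype δ] [DecidableEq δ]
    [MeasurableSpace (unitaryGroup (α × γ) ℂ)] [BorelSpace (unitaryGroup (α × γ) ℂ)]
    (μ : Measure (unitaryGroup (α × γ) ℂ)) [μ.IsMulLeftInvariant] [IsProbabilityMeasure μ]
    (A : Matrix ((α × β) × (γ × δ)) ((α × β) × (γ × δ)) ℂ) {u v : ℂ}
    (hu : u * (Fintype.card α * Fintype.card γ) + v = Fintype.card γ)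
    (hv : u + v * (Fintype.card α * Fintype.card γ) = Fintype.card α) :
    (∫ W : unitaryGroup (α × γ) ℂ,
        (ptrSbar (embedStraddle (W : Matrix (α × γ) (α × γ) ℂ) * A *
            star (embedStraddle (W : Matrix (α × γ) (α × γ) ℂ))) *
          ptrSbar (embedStraddle (W : Matrix (α × γ) (α × γ) ℂ) * A *
            star (embedStraddle (W : Matrix (α × γ) (α × γ) ℂ)))).trace ∂μ)
      = u * (ptrSbarCupSh A * ptrSbarCupSh A).trace +
          v * (ptrSbarDiffShbar A * ptrSbarDiffShbar A).trace := by
  let φ : Matrix ((α × γ) × (α × γ)) ((α × γ) × (α × γ)) ℂ →ₗ[ℂ] ℂ :=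
    traceLinearMap _ ℂ ℂ ∘ₗ LinearMap.mulLeft ℂ (swapFstMatrix α γ ℂ)
  rw [trace_ptrSbarCupSh_mul_self, trace_ptrSbarDiffShbar_mul_self,
    ← trace_mul_haarTwirl_unitaryTensorSquare (μ := μ) (doubledBlock A) (swapFstMatrix α γ ℂ)]
  · simp only [trace_ptrSbar_mul_self, doubledBlock_embedStraddle_conj]
    exact (map_haarTwirl continuous_unitaryTensorSquare φ _).symm
  · rw [trace_swapFstMatrix, Fintype.card_prod, Nat.cast_mul]
    linear_combination (Fintype.card α * Fintype.card γ : ℂ) * hu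
  · rw [trace_swapMatrix_mul_swapFstMatrix, Fintype.card_prod, Nat.cast_mul]
    linear_combination (Fintype.card α * Fintype.card γ : ℂ) * hv

/-- Let `W` be Haar-random on the `d`-dimensional factor
`S_s = S_h ⊗ S_h̄` (with `S_h ⊂ S'`, `S_h̄ ⊂ S̄'`, each of dimension `√d`). Then for any
operator `A` on `S' ⊗ S̄'`,
`E_W[Tr[Tr_{S̄'}[W A W†] Tr_{S̄'}[W A W†]]]
  = (√d/(d+1))·(Tr[Tr_{S̄'∪S_h}[A]²] + Tr[Tr_{S̄'/S_h̄}[A]²])`. -/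
theorem haar_expectation_straddling_purity
    {α β γ δ : Type*} [Fintype α] [DecidableEq α] [Fintype β] [DecidableEq β]
    [Fintype γ] [DecidableEq γ] [Fintype δ] [DecidableEq δ]
    (hcard : Fintype.card γ = Fintype.card α)
    [MeasurableSpace (Matrix.unitaryGroup (α × γ) ℂ)]
    [BorelSpace (Matrix.unitaryGroup (α × γ) ℂ)]
    (μ : Measure (Matrix.unitaryGroup (α × γ) ℂ))
    [μ.IsHaarMeasure] [IsProbabilityMeasure μ]
    (A : Matrix ((α × β) × (γ × δ)) ((α × β) × (γ × δ)) ℂ) :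
    (∫ W : Matrix.unitaryGroup (α × γ) ℂ,
        (ptrSbar (embedStraddle (W : Matrix (α × γ) (α × γ) ℂ) * A *
            star (embedStraddle (W : Matrix (α × γ) (α × γ) ℂ))) *
          ptrSbar (embedStraddle (W : Matrix (α × γ) (α × γ) ℂ) * A *
            star (embedStraddle (W : Matrix (α × γ) (α × γ) ℂ)))).trace ∂μ)
      = ((Fintype.card α : ℂ) / ((Fintype.card α : ℂ) ^ 2 + 1)) *
          ((ptrSbarCupSh A * ptrSbarCupSh A).trace +
            (ptrSbarDiffShbar A * ptrSbarDiffShbar A).trace) := by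
  have h : (Fintype.card α : ℂ) ^ 2 + 1 ≠ 0 := by
    exact_mod_cast Nat.succ_ne_zero (Fintype.card α ^ 2)
  rw [mul_add]
  apply haar_expectation_straddling_purity_general μ A
  · rw [hcard]; field_simp
  · rw [hcard]; field_simp; ring
end
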